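/- arXiv:math/0702704 — 2 statements merged into one kernel-verified Lean document; each statement's English description precedes it below -/
import Mathlib

section
/- Let c, h ∈ ℝ. For i = 1, 2 let η_i be a unitary representation of 𝔎 on a complex inner product space V_i with η_i(C) = c·id, and let Ψ_i ∈ V_i be a unit vector such that η_i(k_n)Ψ_i = hΨ_i for all n > 0 and such that V_i is spanned by the vectors η_i(k_{n_1})⋯η_i(k_{n_r})Ψ_i (r ∈ ℕ, n_1, …, n_r ∈ ℤ ∖ {0}). Then the assignment η_1(k_{n_1})⋯η_1(k_{n_r})Ψ_1 ↦ η_2(k_{n_1})⋯η_2(k_{n_r})Ψ_2 extends to a well-defined ℂ-linear inner-product-preserving bijection W : V_1 → V_2 with WΨ_1 = Ψ_2 and W η_1(x) = η_2(x) W for all x ∈ 𝔎. -/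
/-!
Unitarity reduces every inner product `⟪k_{m₁}⋯k_{m_s}Ψ, k_{n₁}⋯k_{n_r}Ψ⟫` to the expectation value
of the single word `k_{-m_s}⋯k_{-m₁}k_{n₁}⋯k_{n_r}` in the state `Ψ`. Such an expectation value is
determined by `c`, `h` and `‖Ψ‖`, by induction on the length of the word: a negative first letter
acts on the left copy of `Ψ` and contributes `conj h`; a positive first letter is commuted to the
right end, where it contributes `h`, and each commutator on the way only produces shorter words,
since `C` acts as the scalar `c`. Hence the two cyclic families have the same Gram matrix, and
matching their linear combinations is a unitary equivalence.
-/

local notation "⟪" x ", " y "⟫" => @inner ℂ _ _ x y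

/-- A unitary representation of the Lie algebra `𝔎` (the subalgebra of the
Virasoro algebra spanned by `{k_n = l_0 - l_n : n ∈ ℤ ∖ {0}} ∪ {C}`) on a
complex inner product space `V`, described through the images
`K n` of the basis elements `k n` (with `K 0 = 0`, since `k_0 = 0`) and the
image `Cop` of `C`.  The fields record precisely the bracket relations
`[k_r, k_m] = r k_r - m k_m - (r-m) k_{r+m} + (C/12)(r³-r) δ_{r+m,0}`,
`[k_r, C] = 0` of `𝔎`, and unitarity with respect to the involution `θ`
determined by `θ(k_n) = k_{-n}`, `θ(C) = C`. -/
structure KRep (V : Type*) [NormedAddCommGroup V] [InnerProductSpace ℂ V] where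
  K : ℤ → Module.End ℂ V
  Cop : Module.End ℂ V
  K_zero : K 0 = 0
  comm : ∀ r m : ℤ, ⁅K r, K m⁆ =
    (r : ℂ) • K r - (m : ℂ) • K m - ((r - m : ℤ) : ℂ) • K (r + m) +
      (if r + m = 0 then (((r ^ 3 - r : ℤ) : ℂ) / 12) • Cop else 0)
  commC : ∀ r : ℤ, ⁅K r, Cop⁆ = 0
  unitary : ∀ (n : ℤ) (u v : V), ⟪K n u, v⟫ = ⟪u, K (-n) v⟫
  unitaryC : ∀ u v : V, ⟪Cop u, v⟫ = ⟪u, Cop v⟫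

section GramMatrix

theorem exists_linearIsometryEquiv_of_norm_eq {R M E F : Type*} [Ring R]
    [AddCommGroup M] [Module R M] [NormedAddCommGroup E] [Module R E]
    [NormedAddCommGroup F] [Module R F] {f : M →ₗ[R] E} {g : M →ₗ[R] F}
    (hf : Function.Surjective f) (hg : Function.Surjective g) (hnorm : ∀ x, ‖f x‖ = ‖g x‖) :
    ∃ W : E ≃ₗᵢ[R] F, ∀ x, W (f x) = g x := by
  have hker : LinearMap.ker f = LinearMap.ker g := by
    ext x
    rw [LinearMap.mem_ker, LinearMap.mem_ker, ← norm_eq_zero, hnorm, norm_eq_zero]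
  let W : E ≃ₗ[R] F := (f.quotKerEquivOfSurjective hf).symm ≪≫ₗ
    Submodule.quotEquivOfEq _ _ hker ≪≫ₗ g.quotKerEquivOfSurjective hg
  have hW : ∀ x, W (f x) = g x := fun x => by
    have hmk : (f.quotKerEquivOfSurjective hf).symm (f x) = Submodule.Quotient.mk x :=
      (LinearEquiv.symm_apply_eq _).2 rfl
    simp only [W, LinearEquiv.trans_apply, hmk, Submodule.quotEquivOfEq_mk,
      LinearMap.quotKerEquivOfSurjective_apply_mk]
  refine ⟨⟨W, fun v => ?_⟩, hW⟩
  obtain ⟨x, rfl⟩ := hf v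
  rw [hW, hnorm]

variable {𝕜 ι E F : Type*} [RCLike 𝕜] [NormedAddCommGroup E] [InnerProductSpace 𝕜 E]
  [NormedAddCommGroup F] [InnerProductSpace 𝕜 F]

lemma inner_linearCombination_eq_of_inner_eq {v : ι → E} {w : ι → F}
    (hinner : ∀ i j, inner 𝕜 (v i) (v j) = inner 𝕜 (w i) (w j)) (a b : ι →₀ 𝕜) :
    inner 𝕜 (Finsupp.linearCombination 𝕜 v a) (Finsupp.linearCombination 𝕜 v b) =
      inner 𝕜 (Finsupp.linearCombination 𝕜 w a) (Finsupp.linearCombination 𝕜 w b) := by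
  simp only [Finsupp.linearCombination_apply, Finsupp.sum_inner, Finsupp.inner_sum,
    inner_smul_left, inner_smul_right, hinner]

theorem exists_linearIsometryEquiv_of_inner_eq {v : ι → E} {w : ι → F}
    (hv : Submodule.span 𝕜 (Set.range v) = ⊤) (hw : Submodule.span 𝕜 (Set.range w) = ⊤)
    (hinner : ∀ i j, inner 𝕜 (v i) (v j) = inner 𝕜 (w i) (w j)) :
    ∃ W : E ≃ₗᵢ[𝕜] F, ∀ i, W (v i) = w i := by
  rw [← Finsupp.range_linearCombination, LinearMap.range_eq_top] at hv hw
  obtain ⟨W, hW⟩ := exists_linearIsometryEquiv_of_norm_eq hv hw fun a => by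
    rw [norm_eq_sqrt_re_inner (𝕜 := 𝕜), norm_eq_sqrt_re_inner (𝕜 := 𝕜),
      inner_linearCombination_eq_of_inner_eq hinner]
  exact ⟨W, fun i => by simpa using hW (Finsupp.single i 1)⟩

end GramMatrix

section Words

/-- The vector `A_{i₁} ⋯ A_{i_r} Ψ` obtained from `Ψ` by applying the word `[i₁, …, i_r]` in a
family of operators. -/
def wordVec {ι R M : Type*} [Semiring R] [AddCommMonoid M] [Module R M]
    (A : ι → Module.End R M) (Ψ : M) (is : List ι) : M :=
  (is.map A).prod Ψ

section Module

variable {ι R M : Type*} [Semiring R] [AddCommMonoid M] [Module R M]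
  (A : ι → Module.End R M) (Ψ : M)

@[simp]
lemma wordVec_nil : wordVec A Ψ [] = Ψ := by
  simp [wordVec]

@[simp]
lemma wordVec_cons (i : ι) (is : List ι) : wordVec A Ψ (i :: is) = A i (wordVec A Ψ is) := by
  simp [wordVec]

lemma wordVec_append (is js : List ι) :
    wordVec A Ψ (is ++ js) = (is.map A).prod (wordVec A Ψ js) := by
  simp [wordVec]

end Module

/-- The expectation value `⟪Ψ, A_{i₁} ⋯ A_{i_r} Ψ⟫` of the word `[i₁, …, i_r]` in the state `Ψ`. -/
def vacExp {𝕜 ι E : Type*} [RCLike 𝕜] [NormedAddCommGroup E] [InnerProductSpace 𝕜 E]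
    (A : ι → Module.End 𝕜 E) (Ψ : E) (is : List ι) : 𝕜 :=
  inner 𝕜 Ψ (wordVec A Ψ is)

variable {𝕜 ι E F : Type*} [RCLike 𝕜] [NormedAddCommGroup E] [InnerProductSpace 𝕜 E]
  [NormedAddCommGroup F] [InnerProductSpace 𝕜 F] {A : ι → Module.End 𝕜 E}
  {B : ι → Module.End 𝕜 F} {σ : ι → ι} {Ψ : E} {Φ : F}

lemma inner_wordVec_wordVec (hA : ∀ i u v, inner 𝕜 (A i u) v = inner 𝕜 u (A (σ i) v))
    (is js : List ι) :
    inner 𝕜 (wordVec A Ψ is) (wordVec A Ψ js) = vacExp A Ψ ((is.map σ).reverse ++ js) := by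
  induction is generalizing js with
  | nil => simp [vacExp]
  | cons i is ih =>
    rw [wordVec_cons, hA, ← wordVec_cons, ih, List.map_cons, List.reverse_cons, List.append_assoc,
      List.singleton_append]

theorem exists_linearIsometryEquiv_of_vacExp_eq
    (hA : ∀ i u v, inner 𝕜 (A i u) v = inner 𝕜 u (A (σ i) v))
    (hB : ∀ i u v, inner 𝕜 (B i u) v = inner 𝕜 u (B (σ i) v))
    (hΨ : Submodule.span 𝕜 (Set.range (wordVec A Ψ)) = ⊤)
    (hΦ : Submodule.span 𝕜 (Set.range (wordVec B Φ)) = ⊤)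
    (hexp : vacExp A Ψ = vacExp B Φ) :
    ∃ W : E ≃ₗᵢ[𝕜] F, (∀ is, W (wordVec A Ψ is) = wordVec B Φ is) ∧
      ∀ i v, W (A i v) = B i (W v) := by
  obtain ⟨W, hW⟩ := exists_linearIsometryEquiv_of_inner_eq hΨ hΦ fun is js => by
    rw [inner_wordVec_wordVec hA, inner_wordVec_wordVec hB, hexp]
  refine ⟨W, hW, fun i v => ?_⟩
  have hcomm : W.toLinearMap ∘ₗ A i = B i ∘ₗ W.toLinearMap :=
    LinearMap.ext_on_range hΨ fun is => by simp [hW, ← wordVec_cons]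
  exact LinearMap.congr_fun hcomm v

end Words

/-- The scalar by which the central term of `[k_n, k_m]` acts in central charge `c`. -/
noncomputable def virasoroCocycle (c : ℂ) (n m : ℤ) : ℂ :=
  if n + m = 0 then ((n ^ 3 - n : ℤ) : ℂ) / 12 * c else 0

/-- The relations satisfied by the expectation values of words in the `k_n` in a state `Ψ` with
`k_n Ψ = h Ψ` for all `n > 0`, in central charge `c`. The functional is not normalized: its value
on the empty word is `‖Ψ‖²`. -/
structure IsVacuumFunctional (c h : ℂ) (φ : List ℤ → ℂ) : Prop where
  cons_of_neg : ∀ n < 0, ∀ ns, φ (n :: ns) = starRingEnd ℂ h * φ ns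
  zero_cons : ∀ ns, φ (0 :: ns) = 0
  append_of_pos : ∀ n > 0, ∀ ns, φ (ns ++ [n]) = h * φ ns
  swap : ∀ ps n m ns, φ (ps ++ n :: m :: ns) =
    φ (ps ++ m :: n :: ns) + n * φ (ps ++ n :: ns) - m * φ (ps ++ m :: ns)
      - ((n - m : ℤ) : ℂ) * φ (ps ++ (n + m) :: ns) + virasoroCocycle c n m * φ (ps ++ ns)

namespace IsVacuumFunctional

variable {c h : ℂ} {φ ψ : List ℤ → ℂ}

lemma append_cons_eq_of_pos (hφ : IsVacuumFunctional c h φ) (hψ : IsVacuumFunctional c h ψ)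
    {n : ℤ} (hn : 0 < n) (ps ns : List ℤ)
    (hshort : ∀ ms : List ℤ, ms.length ≤ ps.length + ns.length → φ ms = ψ ms) :
    φ (ps ++ n :: ns) = ψ (ps ++ n :: ns) := by
  induction ns generalizing ps with
  | nil => rw [hφ.append_of_pos n hn, hψ.append_of_pos n hn, hshort ps (by simp)]
  | cons m ns ih =>
    have hmoved : φ (ps ++ m :: n :: ns) = ψ (ps ++ m :: n :: ns) := by
      simpa using ih (ps ++ [m]) fun ms hms => hshort ms (by grind)
    have hletter : ∀ k, φ (ps ++ k :: ns) = ψ (ps ++ k :: ns) := fun k => hshort _ (by simp)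
    have hnone : φ (ps ++ ns) = ψ (ps ++ ns) := hshort _ (by grind)
    rw [hφ.swap, hψ.swap, hmoved, hletter, hletter, hletter, hnone]

theorem eq_of_nil_eq (hφ : IsVacuumFunctional c h φ) (hψ : IsVacuumFunctional c h ψ)
    (hnil : φ [] = ψ []) : φ = ψ := by
  funext ns
  induction hlen : ns.length using Nat.strong_induction_on generalizing ns with
  | _ N ih =>
    cases ns with
    | nil => exact hnil
    | cons n ns =>
      have hshort : ∀ ms : List ℤ, ms.length ≤ ns.length → φ ms = ψ ms := fun ms hms =>
        ih ms.length (by grind) ms rfl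
      rcases lt_trichotomy n 0 with hneg | rfl | hpos
      · rw [hφ.cons_of_neg n hneg, hψ.cons_of_neg n hneg, hshort ns le_rfl]
      · rw [hφ.zero_cons, hψ.zero_cons]
      · exact hφ.append_cons_eq_of_pos hψ hpos [] ns (by simpa using hshort)

end IsVacuumFunctional

namespace KRep

variable {V : Type*} [NormedAddCommGroup V] [InnerProductSpace ℂ V] (η : KRep V)
  {c h : ℂ} {Ψ : V}

lemma K_K_apply (hC : η.Cop = c • 1) (n m : ℤ) (v : V) :
    η.K n (η.K m v) = η.K m (η.K n v) + (n : ℂ) • η.K n v - (m : ℂ) • η.K m v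
      - ((n - m : ℤ) : ℂ) • η.K (n + m) v + virasoroCocycle c n m • v := by
  have hcentral : (if n + m = 0 then (((n ^ 3 - n : ℤ) : ℂ) / 12) • η.Cop else 0) =
      virasoroCocycle c n m • (1 : Module.End ℂ V) := by
    rw [virasoroCocycle, hC]
    split_ifs <;> simp only [smul_smul, zero_smul]
  have hbracket := LinearMap.congr_fun (η.comm n m) v
  rw [hcentral, Ring.lie_def] at hbracket
  simp only [LinearMap.add_apply, LinearMap.sub_apply, LinearMap.smul_apply,
    Module.End.mul_apply, Module.End.one_apply] at hbracket
  rw [sub_eq_iff_eq_add'] at hbracket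
  rw [hbracket]
  abel

theorem isVacuumFunctional_vacExp (hC : η.Cop = c • 1)
    (hev : ∀ n : ℤ, 0 < n → η.K n Ψ = h • Ψ) : IsVacuumFunctional c h (vacExp η.K Ψ) where
  cons_of_neg n hn ns := by
    rw [vacExp, wordVec_cons, ← neg_neg n, ← η.unitary, hev (-n) (neg_pos.2 hn), inner_smul_left,
      vacExp]
  zero_cons ns := by
    rw [vacExp, wordVec_cons, η.K_zero, LinearMap.zero_apply, inner_zero_right]
  append_of_pos n hn ns := by
    rw [vacExp, wordVec_append, wordVec_cons, wordVec_nil, hev n hn, map_smul, inner_smul_right,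
      vacExp, wordVec]
  swap ps n m ns := by
    simp only [vacExp, wordVec_append, wordVec_cons]
    rw [η.K_K_apply hC]
    simp only [map_add, map_sub, map_smul, inner_add_right, inner_sub_right, inner_smul_right]

lemma span_range_wordVec_eq_top
    (hspan : Submodule.span ℂ {w : V | ∃ ns : List ℤ, (∀ n ∈ ns, n ≠ 0) ∧
      w = (ns.map η.K).prod Ψ} = ⊤) :
    Submodule.span ℂ (Set.range (wordVec η.K Ψ)) = ⊤ := by
  refine eq_top_mono (Submodule.span_mono ?_) hspan
  rintro w ⟨ns, -, rfl⟩
  exact ⟨ns, rfl⟩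

end KRep

theorem statement7_general {V₁ V₂ : Type*}
    [NormedAddCommGroup V₁] [InnerProductSpace ℂ V₁]
    [NormedAddCommGroup V₂] [InnerProductSpace ℂ V₂]
    (c : ℝ) (h : ℂ) (η₁ : KRep V₁) (η₂ : KRep V₂) (Ψ₁ : V₁) (Ψ₂ : V₂)
    (hC₁ : η₁.Cop = (c : ℂ) • 1) (hC₂ : η₂.Cop = (c : ℂ) • 1)
    (hnorm : ‖Ψ₁‖ = ‖Ψ₂‖)
    (hev₁ : ∀ n : ℤ, 0 < n → η₁.K n Ψ₁ = h • Ψ₁)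
    (hev₂ : ∀ n : ℤ, 0 < n → η₂.K n Ψ₂ = h • Ψ₂)
    (hspan₁ : Submodule.span ℂ {w : V₁ | ∃ ns : List ℤ, (∀ n ∈ ns, n ≠ 0) ∧
        w = (ns.map η₁.K).prod Ψ₁} = ⊤)
    (hspan₂ : Submodule.span ℂ {w : V₂ | ∃ ns : List ℤ, (∀ n ∈ ns, n ≠ 0) ∧
        w = (ns.map η₂.K).prod Ψ₂} = ⊤) :
    ∃ W : V₁ ≃ₗᵢ[ℂ] V₂,
      (∀ ns : List ℤ, W ((ns.map η₁.K).prod Ψ₁) = (ns.map η₂.K).prod Ψ₂) ∧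
      (∀ (n : ℤ) (v : V₁), W (η₁.K n v) = η₂.K n (W v)) ∧
      (∀ v : V₁, W (η₁.Cop v) = η₂.Cop (W v)) := by
  have hnil : vacExp η₁.K Ψ₁ [] = vacExp η₂.K Ψ₂ [] := by
    simp only [vacExp, wordVec_nil, inner_self_eq_norm_sq_to_K, hnorm]
  have hexp : vacExp η₁.K Ψ₁ = vacExp η₂.K Ψ₂ :=
    (η₁.isVacuumFunctional_vacExp hC₁ hev₁).eq_of_nil_eq
      (η₂.isVacuumFunctional_vacExp hC₂ hev₂) hnil
  obtain ⟨W, hword, hK⟩ := exists_linearIsometryEquiv_of_vacExp_eq η₁.unitary η₂.unitary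
    (η₁.span_range_wordVec_eq_top hspan₁) (η₂.span_range_wordVec_eq_top hspan₂) hexp
  refine ⟨W, hword, hK, fun v => ?_⟩
  simp only [hC₁, hC₂, LinearMap.smul_apply, Module.End.one_apply, map_smul]

/-- Two unitary representations of `𝔎` with the same central charge `c`, each
with a cyclic unit vector `Ψᵢ` satisfying `K n Ψᵢ = h • Ψᵢ` for all `n > 0`,
are unitarily equivalent: the assignment
`η₁(k_{n₁})⋯η₁(k_{n_r})Ψ₁ ↦ η₂(k_{n₁})⋯η₂(k_{n_r})Ψ₂` extends to a
well-defined linear inner-product-preserving bijection intertwining the two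
representations. -/
theorem statement7 {V₁ V₂ : Type*}
    [NormedAddCommGroup V₁] [InnerProductSpace ℂ V₁]
    [NormedAddCommGroup V₂] [InnerProductSpace ℂ V₂]
    (c h : ℝ) (η₁ : KRep V₁) (η₂ : KRep V₂) (Ψ₁ : V₁) (Ψ₂ : V₂)
    (hC₁ : η₁.Cop = (c : ℂ) • 1) (hC₂ : η₂.Cop = (c : ℂ) • 1)
    (hΨ₁ : ‖Ψ₁‖ = 1) (hΨ₂ : ‖Ψ₂‖ = 1)
    (hev₁ : ∀ n : ℤ, 0 < n → η₁.K n Ψ₁ = (h : ℂ) • Ψ₁)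
    (hev₂ : ∀ n : ℤ, 0 < n → η₂.K n Ψ₂ = (h : ℂ) • Ψ₂)
    (hspan₁ : Submodule.span ℂ {w : V₁ | ∃ ns : List ℤ, (∀ n ∈ ns, n ≠ 0) ∧
        w = (ns.map η₁.K).prod Ψ₁} = ⊤)
    (hspan₂ : Submodule.span ℂ {w : V₂ | ∃ ns : List ℤ, (∀ n ∈ ns, n ≠ 0) ∧
        w = (ns.map η₂.K).prod Ψ₂} = ⊤) :
    ∃ W : V₁ →ₗ[ℂ] V₂, Function.Bijective W ∧
      (∀ u v : V₁, ⟪W u, W v⟫ = ⟪u, v⟫) ∧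
      W Ψ₁ = Ψ₂ ∧
      (∀ ns : List ℤ, (∀ n ∈ ns, n ≠ 0) →
        W ((ns.map η₁.K).prod Ψ₁) = (ns.map η₂.K).prod Ψ₂) ∧
      (∀ (n : ℤ) (v : V₁), W (η₁.K n v) = η₂.K n (W v)) ∧
      (∀ v : V₁, W (η₁.Cop v) = η₂.Cop (W v)) := by
  obtain ⟨W, hword, hK, hC⟩ := statement7_general c h η₁ η₂ Ψ₁ Ψ₂ hC₁ hC₂ (hΨ₁.trans hΨ₂.symm)
    hev₁ hev₂ hspan₁ hspan₂
  exact ⟨W, W.bijective, W.inner_map_map, hword [], fun ns _ => hword ns, hK, hC⟩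
end

section
/- Let (V, J_n, L_n) be a Sugawara system and α ∈ ℝ. Then there exists a unitary representation π of 𝔎 on V with π(k_n) = K^α_n for all n ∈ ℤ ∖ {0} and π(C) = (1 + 12α²)·id; that is, the operators K^α_n satisfy the commutation relations [K^α_r, K^α_m] = r K^α_r − m K^α_m − (r − m) K^α_{r+m} + ((1+12α²)/12)(r³ − r) δ_{r+m,0} id and the unitarity relation ⟨K^α_n u, v⟩ = ⟨u, K^α_{−n} v⟩. -/
local notation "⟪" x ", " y "⟫" => @inner ℂ _ _ x y

/-- A Sugawara system on a complex inner product space `V`: a `U(1)` current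
`J` together with the associated stress-energy operators `L` (central charge
`1`), satisfying `[J_n, J_m] = n δ_{n+m,0}`, `J_n⁺ = J_{-n}`,
`[L_n, L_m] = (n-m) L_{n+m} + (1/12)(n³-n) δ_{n+m,0}`, `L_n⁺ = L_{-n}`, and
`[L_n, J_m] = -m J_{n+m}`. -/
structure Sugawara (V : Type*) [NormedAddCommGroup V] [InnerProductSpace ℂ V] where
  J : ℤ → Module.End ℂ V
  L : ℤ → Module.End ℂ V
  commJJ : ∀ n m : ℤ, ⁅J n, J m⁆ =
    (if n + m = 0 then (n : ℂ) • (1 : Module.End ℂ V) else 0)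
  unitaryJ : ∀ (n : ℤ) (u v : V), ⟪J n u, v⟫ = ⟪u, J (-n) v⟫
  commLL : ∀ n m : ℤ, ⁅L n, L m⁆ =
    ((n - m : ℤ) : ℂ) • L (n + m) +
      (if n + m = 0 then (((n ^ 3 - n : ℤ) : ℂ) / 12) • (1 : Module.End ℂ V) else 0)
  unitaryL : ∀ (n : ℤ) (u v : V), ⟪L n u, v⟫ = ⟪u, L (-n) v⟫
  commLJ : ∀ n m : ℤ, ⁅L n, J m⁆ = (-(m : ℂ)) • J (n + m)

variable {V : Type*} [NormedAddCommGroup V] [InnerProductSpace ℂ V]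
/-- `K^α_n = (L_0 - L_n) + i n α (J_n + (1/|n|)(J_0 + J_n - 2 Σ_{k=min(0,n)}^{max(0,n)} J_k))`. -/
noncomputable def Kalpha (S : Sugawara V) (α : ℝ) (n : ℤ) : Module.End ℂ V :=
  (S.L 0 - S.L n) +
    (Complex.I * (n : ℂ) * (α : ℂ)) •
      (S.J n + ((|n| : ℤ) : ℂ)⁻¹ •
        (S.J 0 + S.J n -
          (2 : ℂ) • ∑ k ∈ Finset.Icc (min 0 n) (max 0 n), S.J k))

/-!
Identify `J_k` with `z ^ k`. Then `K^α_n = k_n + i α A_n`, where `k_n = L_0 - L_n` acts as the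
vector field `(z ^ n - 1) z d/dz` and `A_n = n z ^ n - T_n` for the trapezoidal sums
`T_n = (1 + z) (1 - z ^ n) / (1 - z)`. Both `n ↦ n z ^ n` and `n ↦ T_n` are 1-cocycles of `𝔎`, so
adding `i α A_n` to `k_n` changes the bracket relations only by the quadratic term
`(i α)² [A_r, A_m]`. This term is the scalar `α² (r³ - r) δ_{r+m,0}`, which raises the central
charge from `1` to `1 + 12 α²`. All identities for `T` follow from `T_0 = 0` and
`T_{n+1} = T_n + J_n + J_{n+1}` by induction on `n` in both directions.
-/

section SignedTrapezoid

variable {M : Type*} [AddCommGroup M]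

lemma eq_of_add_one_sub_eq {X Y : ℤ → M} (h0 : X 0 = Y 0)
    (hstep : ∀ n, X (n + 1) - X n = Y (n + 1) - Y n) (n : ℤ) : X n = Y n := by
  have hper : Function.Periodic (X - Y) 1 := fun n => by
    simpa only [Pi.sub_apply] using sub_eq_sub_iff_sub_eq_sub.mpr (hstep n)
  have hn := hper.zsmul_eq n
  rw [zsmul_one, Int.cast_id, Pi.sub_apply, Pi.sub_apply, h0, sub_self] at hn
  exact sub_eq_zero.mp hn

/-- Twice the trapezoidal sum of `J` over the integer interval from `0` to `n`, counted negatively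
when `n < 0`. -/
def signedTrapezoid (J : ℤ → M) (n : ℤ) : M :=
  n.sign • ((2 : ℤ) • ∑ k ∈ Finset.uIcc 0 n, J k - J 0 - J n)

lemma signedTrapezoid_zero (J : ℤ → M) : signedTrapezoid J 0 = 0 := by
  simp [signedTrapezoid]

lemma sum_uIcc_zero_add_one_of_nonneg (J : ℤ → M) {n : ℤ} (hn : 0 ≤ n) :
    ∑ k ∈ Finset.uIcc 0 (n + 1), J k = J (n + 1) + ∑ k ∈ Finset.uIcc 0 n, J k := by
  have hinsert : Finset.uIcc 0 (n + 1) = insert (n + 1) (Finset.uIcc 0 n) := by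
    ext k; simp only [Finset.mem_insert, Finset.mem_uIcc]; omega
  rw [hinsert, Finset.sum_insert (by simp only [Finset.mem_uIcc]; omega)]

lemma sum_uIcc_zero_of_neg (J : ℤ → M) {n : ℤ} (hn : n < 0) :
    ∑ k ∈ Finset.uIcc 0 n, J k = J n + ∑ k ∈ Finset.uIcc 0 (n + 1), J k := by
  have hinsert : Finset.uIcc 0 n = insert n (Finset.uIcc 0 (n + 1)) := by
    ext k; simp only [Finset.mem_insert, Finset.mem_uIcc]; omega
  rw [hinsert, Finset.sum_insert (by simp only [Finset.mem_uIcc]; omega)]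

lemma signedTrapezoid_add_one (J : ℤ → M) (n : ℤ) :
    signedTrapezoid J (n + 1) = signedTrapezoid J n + J n + J (n + 1) := by
  unfold signedTrapezoid
  rcases lt_or_ge n 0 with hneg | hnonneg
  · rw [sum_uIcc_zero_of_neg J hneg, Int.sign_eq_neg_one_of_neg hneg]
    rcases (Int.add_one_le_of_lt hneg).lt_or_eq with hlt | heq
    · rw [Int.sign_eq_neg_one_of_neg hlt]
      module
    · simp only [heq, Int.sign_zero, Finset.uIcc_self, Finset.sum_singleton]
      module
  · rw [sum_uIcc_zero_add_one_of_nonneg J hnonneg, Int.sign_eq_one_of_pos (by omega : 0 < n + 1)]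
    rcases hnonneg.lt_or_eq with hpos | rfl
    · rw [Int.sign_eq_one_of_pos hpos]
      module
    · simp only [Int.sign_zero, Finset.uIcc_self, Finset.sum_singleton]
      module

end SignedTrapezoid

section Cocycle

variable {𝔤 M : Type*} [LieRing 𝔤] [AddCommGroup M] [LieRingModule 𝔤 M]

/-- The right-hand side `r x_r - m x_m - (r - m) x_{r+m}` of the bracket relations of `𝔎` without
the central term, for an arbitrary family `x`. -/
def kBracket (x : ℤ → M) (r m : ℤ) : M :=
  r • x r - m • x m - (r - m) • x (r + m)

/-- `c` is a 1-cocycle of the centreless `𝔎` with values in `M`, where `k_n` acts through `k n`. -/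
def IsKCocycle (k : ℤ → 𝔤) (c : ℤ → M) : Prop :=
  ∀ r m, ⁅k r, c m⁆ - ⁅k m, c r⁆ = kBracket c r m

lemma IsKCocycle.sub {k : ℤ → 𝔤} {c d : ℤ → M} (hc : IsKCocycle k c) (hd : IsKCocycle k d) :
    IsKCocycle k (c - d) := fun r m => by
  have hcd := congrArg₂ (· - ·) (hc r m) (hd r m)
  simp only [kBracket, Pi.sub_apply, lie_sub] at hcd ⊢
  linear_combination (norm := module) hcd

lemma IsKCocycle.lie_add_smul {R : Type*} [CommRing R] [LieAlgebra R 𝔤] {k c : ℤ → 𝔤}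
    (hc : IsKCocycle k c) (a : R) (r m : ℤ) :
    ⁅k r + a • c r, k m + a • c m⁆ =
      kBracket (k + a • c) r m + (⁅k r, k m⁆ - kBracket k r m) + a ^ 2 • ⁅c r, c m⁆ := by
  have hcross : a • (⁅k r, c m⁆ + ⁅c r, k m⁆) = a • kBracket c r m := by
    rw [← hc r m, ← lie_skew (c r) (k m), sub_eq_add_neg]
  simp only [lie_add, add_lie, lie_smul, smul_lie, kBracket, Pi.add_apply, Pi.smul_apply]
    at hcross ⊢
  linear_combination (norm := module) hcross

variable {L : ℤ → 𝔤} {J : ℤ → M}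

lemma lie_zero_sub_eq_kBracket_add {ψ : ℤ → 𝔤}
    (hL : ∀ n m, ⁅L n, L m⁆ = (n - m) • L (n + m) + if n + m = 0 then ψ n else 0) (r m : ℤ) :
    ⁅L 0 - L r, L 0 - L m⁆ =
      kBracket (fun n => L 0 - L n) r m + if r + m = 0 then ψ r else 0 := by
  have hψ : ψ 0 = 0 := by simpa using (hL 0 0).symm
  have hzero (n : ℤ) : ⁅L 0, L n⁆ = -(n • L n) := by
    rw [hL]
    rcases eq_or_ne n 0 with rfl | hn <;> simp [*]
  rw [lie_sub, sub_lie, sub_lie, lie_self, ← lie_skew (L r) (L 0), hzero, hzero, hL, kBracket]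
  module

lemma isKCocycle_zsmul (hLJ : ∀ n m, ⁅L n, J m⁆ = -(m • J (n + m))) :
    IsKCocycle (fun n => L 0 - L n) (fun n => n • J n) := fun r m => by
  simp only [kBracket, lie_zsmul, sub_lie, hLJ, zero_add, add_comm m r]
  module

/-- `L_n` acts as `-z ^ n z d/dz`, and the factor `1 - z` in `L_{m+1} - L_m` cancels the double pole
of the derivative of `(1 + z) / (1 - z)`. Hence the difference has this closed form, while
`⁅L_m, T_r⁆` alone is a double sum. -/
lemma add_one_lie_signedTrapezoid_sub (hLJ : ∀ n m, ⁅L n, J m⁆ = -(m • J (n + m))) (m r : ℤ) :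
    ⁅L (m + 1), signedTrapezoid J r⁆ - ⁅L m, signedTrapezoid J r⁆ =
      signedTrapezoid J (m + r) - signedTrapezoid J m - J m + J (m + r)
        - r • (J (m + r) + J (m + r + 1)) := by
  revert r
  refine eq_of_add_one_sub_eq ?_ fun r => ?_
  · simp only [signedTrapezoid_zero, lie_zero, add_zero]
    module
  · simp only [signedTrapezoid_add_one, lie_add, hLJ, ← add_assoc, add_right_comm m 1 r]
    module

lemma isKCocycle_signedTrapezoid (hLJ : ∀ n m, ⁅L n, J m⁆ = -(m • J (n + m))) :
    IsKCocycle (fun n => L 0 - L n) (signedTrapezoid J) := fun r => by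
  refine eq_of_add_one_sub_eq ?_ fun m => ?_
  · simp [kBracket, signedTrapezoid_zero]
  · have hstep := add_one_lie_signedTrapezoid_sub hLJ m r
    simp only [kBracket, sub_lie, lie_add, signedTrapezoid_add_one, hLJ, ← add_assoc, zero_add,
      add_comm m r] at hstep ⊢
    linear_combination (norm := module) hstep

end Cocycle

/-- The coefficient of `i α` in `K^α_n`, as an element of the span of the modes of `J`. -/
def currentCocycle {M : Type*} [AddCommGroup M] (J : ℤ → M) : ℤ → M :=
  (fun n => n • J n) - signedTrapezoid J

lemma isKCocycle_currentCocycle {𝔤 M : Type*} [LieRing 𝔤] [AddCommGroup M] [LieRingModule 𝔤 M]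
    {L : ℤ → 𝔤} {J : ℤ → M} (hLJ : ∀ n m, ⁅L n, J m⁆ = -(m • J (n + m))) :
    IsKCocycle (fun n => L 0 - L n) (currentCocycle J) :=
  (isKCocycle_zsmul hLJ).sub (isKCocycle_signedTrapezoid hLJ)

section Heisenberg

lemma add_one_mul_abs_add_one (n : ℤ) : (n + 1) * |n + 1| = n * |n| + |n| + |n + 1| := by
  grind

lemma sign_add_one_sub_sign (n : ℤ) :
    (n + 1).sign - n.sign = (if n = 0 then 1 else 0) + if n + 1 = 0 then 1 else 0 := by
  grind [Int.sign_eq_one_of_pos, Int.sign_eq_neg_one_of_neg, Int.sign_zero]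

lemma sign_add_sign_add_one (n : ℤ) :
    n.sign + (n + 1).sign =
      2 * |n + 1| - 2 * |n| + (if n + 1 = 0 then 1 else 0) - if n = 0 then 1 else 0 := by
  grind [Int.sign_eq_one_of_pos, Int.sign_eq_neg_one_of_neg, Int.sign_zero]

variable {𝔤 : Type*} [LieRing 𝔤] {J : ℤ → 𝔤} {z : 𝔤}

/-- For `k ≠ 0` the coefficient of `J_{-k}` in `T_m` is `sgn (k + m) - sgn k`. -/
lemma lie_signedTrapezoid (hJ : ∀ n m, ⁅J n, J m⁆ = (if n + m = 0 then n else 0) • z) (k m : ℤ) :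
    ⁅J k, signedTrapezoid J m⁆ = (k * (k + m).sign - |k|) • z := by
  revert m
  refine eq_of_add_one_sub_eq ?_ fun m => ?_
  · simp [signedTrapezoid_zero, Int.mul_sign_self]
  · have hsign := sign_add_one_sub_sign (k + m)
    have hcoeff : k * (k + m + 1).sign - k * (k + m).sign =
        (if k + m = 0 then k else 0) + if k + m + 1 = 0 then k else 0 := by
      rw [← mul_sub, hsign, mul_add, mul_ite, mul_ite, mul_one, mul_zero]
    rw [signedTrapezoid_add_one, lie_add, lie_add, hJ, hJ, ← add_assoc, ← sub_smul,
      sub_sub_sub_cancel_right, hcoeff]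
    module

lemma signedTrapezoid_lie_signedTrapezoid
    (hJ : ∀ n m, ⁅J n, J m⁆ = (if n + m = 0 then n else 0) • z) (r m : ℤ) :
    ⁅signedTrapezoid J r, signedTrapezoid J m⁆ =
      ((if r + m = 0 then r else 0) - r * |r| + m * |m| + (r - m) * |r + m|) • z := by
  revert r
  refine eq_of_add_one_sub_eq ?_ fun r => ?_
  · simp [signedTrapezoid_zero]
  · have hdelta (n : ℤ) : (if n + m = 0 then n else 0) = -m * if n + m = 0 then 1 else 0 := by
      split_ifs <;> omega
    have habs := add_one_mul_abs_add_one r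
    have habs' := add_one_mul_abs_add_one (r + m)
    have hsign := sign_add_sign_add_one (r + m)
    have hself := Int.sign_mul_self_eq_abs (r + m)
    have hself' := Int.sign_mul_self_eq_abs (r + m + 1)
    rw [signedTrapezoid_add_one, add_lie, add_lie, lie_signedTrapezoid hJ, lie_signedTrapezoid hJ,
      hdelta, hdelta, add_right_comm r 1 m, add_assoc, add_sub_cancel_left, ← add_smul, ← sub_smul]
    congr 1
    linear_combination habs - habs' - m * hsign + hself + hself'

lemma currentCocycle_lie_currentCocycle
    (hJ : ∀ n m, ⁅J n, J m⁆ = (if n + m = 0 then n else 0) • z) (r m : ℤ) :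
    ⁅currentCocycle J r, currentCocycle J m⁆ = if r + m = 0 then -((r ^ 3 - r) • z) else 0 := by
  have hskew : ⁅signedTrapezoid J r, J m⁆ = -⁅J m, signedTrapezoid J r⁆ := (lie_skew _ _).symm
  simp only [currentCocycle, Pi.sub_apply, sub_lie, lie_sub, zsmul_lie, lie_zsmul, hskew, hJ,
    lie_signedTrapezoid hJ, signedTrapezoid_lie_signedTrapezoid hJ]
  rw [add_comm m r, ← Int.sign_mul_self_eq_abs (r + m)]
  split_ifs with h
  · obtain rfl : m = -r := by omega
    simp only [add_neg_cancel, Int.sign_zero, abs_neg]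
    module
  · module

end Heisenberg

section Adjoint

variable {𝕜 E : Type*} [RCLike 𝕜] [NormedAddCommGroup E] [InnerProductSpace 𝕜 E]
  {J : ℤ → Module.End 𝕜 E}

lemma inner_signedTrapezoid_left (hJ : ∀ n u v, inner 𝕜 (J n u) v = inner 𝕜 u (J (-n) v))
    (n : ℤ) (u v : E) :
    inner 𝕜 (signedTrapezoid J n u) v = -inner 𝕜 u (signedTrapezoid J (-n) v) := by
  revert n
  refine eq_of_add_one_sub_eq (by simp [signedTrapezoid_zero]) fun n => ?_
  have hneg := signedTrapezoid_add_one J (-(n + 1))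
  rw [neg_add, neg_add_cancel_right] at hneg
  simp only [neg_add, hneg, signedTrapezoid_add_one, LinearMap.add_apply, inner_add_left,
    inner_add_right, hJ]
  ring

lemma inner_currentCocycle_left (hJ : ∀ n u v, inner 𝕜 (J n u) v = inner 𝕜 u (J (-n) v))
    (n : ℤ) (u v : E) :
    inner 𝕜 (currentCocycle J n u) v = -inner 𝕜 u (currentCocycle J (-n) v) := by
  simp only [currentCocycle, Pi.sub_apply, ← Int.cast_smul_eq_zsmul 𝕜, LinearMap.sub_apply,
    LinearMap.smul_apply, inner_sub_left, inner_sub_right, inner_smul_left, inner_smul_right,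
    hJ, inner_signedTrapezoid_left hJ, map_intCast]
  push_cast
  ring

end Adjoint

namespace Sugawara

lemma Kalpha_eq (S : Sugawara V) (α : ℝ) (n : ℤ) :
    Kalpha S α n = (S.L 0 - S.L n) + (Complex.I * α) • currentCocycle S.J n := by
  -- At `n = 0` both sides vanish because `0⁻¹ = 0`.
  have hsign : (n : ℂ) * ((|n| : ℤ) : ℂ)⁻¹ = (n.sign : ℂ) := by
    rcases eq_or_ne n 0 with rfl | hn
    · simp
    · have hne : ((|n| : ℤ) : ℂ) ≠ 0 := by exact_mod_cast abs_ne_zero.mpr hn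
      rw [mul_inv_eq_iff_eq_mul₀ hne]
      exact_mod_cast (Int.sign_mul_abs n).symm
  rw [Kalpha, currentCocycle, Pi.sub_apply, signedTrapezoid, ← Int.cast_smul_eq_zsmul ℂ n.sign,
    ← hsign, Finset.uIcc]
  module

lemma inner_Kalpha_left (S : Sugawara V) (α : ℝ) (n : ℤ) (u v : V) :
    ⟪Kalpha S α n u, v⟫ = ⟪u, Kalpha S α (-n) v⟫ := by
  simp only [Kalpha_eq, LinearMap.add_apply, LinearMap.sub_apply, LinearMap.smul_apply,
    inner_add_left, inner_add_right, inner_sub_left, inner_sub_right, inner_smul_left,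
    inner_smul_right, S.unitaryL, inner_currentCocycle_left S.unitaryJ, map_mul, Complex.conj_I,
    Complex.conj_ofReal, neg_zero]
  ring

attribute [local instance] LieRing.ofAssociativeRing

lemma Kalpha_lie_Kalpha (S : Sugawara V) (α : ℝ) (r m : ℤ) :
    ⁅Kalpha S α r, Kalpha S α m⁆ =
      (r : ℂ) • Kalpha S α r - (m : ℂ) • Kalpha S α m - ((r - m : ℤ) : ℂ) • Kalpha S α (r + m) +
        if r + m = 0 then
          (((r ^ 3 - r : ℤ) : ℂ) / 12) • ((1 + 12 * α ^ 2 : ℝ) : ℂ) • (1 : Module.End ℂ V)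
        else 0 := by
  have hJ (n m : ℤ) : ⁅S.J n, S.J m⁆ = (if n + m = 0 then n else 0) • (1 : Module.End ℂ V) := by
    rw [S.commJJ, ← Int.cast_smul_eq_zsmul ℂ]
    split_ifs <;> simp
  have hLJ (n m : ℤ) : ⁅S.L n, S.J m⁆ = -(m • S.J (n + m)) := by
    rw [S.commLJ, neg_smul, Int.cast_smul_eq_zsmul]
  have hL (n m : ℤ) : ⁅S.L n, S.L m⁆ = (n - m) • S.L (n + m) +
      if n + m = 0 then (((n ^ 3 - n : ℤ) : ℂ) / 12) • (1 : Module.End ℂ V) else 0 := by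
    rw [S.commLL, Int.cast_smul_eq_zsmul]
  have hdeform := (isKCocycle_currentCocycle hLJ).lie_add_smul (Complex.I * α) r m
  rw [lie_zero_sub_eq_kBracket_add hL, currentCocycle_lie_currentCocycle hJ, mul_pow,
    Complex.I_sq] at hdeform
  simp only [Kalpha_eq]
  refine hdeform.trans ?_
  simp only [kBracket, Pi.add_apply, Pi.smul_apply]
  split_ifs
  · push_cast
    module
  · module

end Sugawara

/-- For any Sugawara system and `α ∈ ℝ`, the assignment `k n ↦ K^α_n`
(`n ∈ ℤ ∖ {0}`), `C ↦ (1 + 12α²)·id` gives a unitary representation of `𝔎`: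
the operators `K^α_n` satisfy the bracket relations of `𝔎` with central
charge `1 + 12α²` and the unitarity relation `⟪K^α_n u, v⟫ = ⟪u, K^α_{-n} v⟫`. -/
theorem statement10 (S : Sugawara V) (α : ℝ) :
    ∃ P : KRep V, (∀ n : ℤ, n ≠ 0 → P.K n = Kalpha S α n) ∧
      P.Cop = ((1 + 12 * α ^ 2 : ℝ) : ℂ) • (1 : Module.End ℂ V) := by
  refine ⟨{
    K := Kalpha S α
    Cop := ((1 + 12 * α ^ 2 : ℝ) : ℂ) • 1
    K_zero := by simp [Kalpha]
    comm := S.Kalpha_lie_Kalpha α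
    commC := fun r => by simp [Ring.lie_def]
    unitary := S.inner_Kalpha_left α
    unitaryC := fun u v => by
      simp only [LinearMap.smul_apply, Module.End.one_apply, inner_smul_left, inner_smul_right,
        Complex.conj_ofReal] }, fun _ _ => rfl, rfl⟩
end
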